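/- Let m, n ≥ 1. The weight enumerator of the stabilizer group S of the n×m concatenated bit- and phase-flip repetition code equals (1/2)·[ (f^e_n(x,y) + 2^(n−1)·y^n)^m + (f^e_n(x,y) − 2^(n−1)·y^n)^m ] for all real x, y, where f^e_n(x,y) = ((x+y)^n + (x−y)^n)/2. -/

import Mathlib

/-!
A stabilizer element is a choice, for each block, of a pair (X-part, Z-value) with X-part of even
weight, subject to the single constraint that the Z-values sum to zero. The monomial
`x ^ (m * n - wt v) * y ^ wt v` is a product over qubits, so it factors over blocks. A parity
constraint on a product is resolved by the sign character `χ` (`signChar`) of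
`ZMod 2`, through `[s = 0] = (1 + χ s) / 2`; this turns the constrained sum of a product into an average of two
powers (`sum_even_prod`). Applying that lemma across the `m` blocks, and then within
each block, gives the formula: blocks with Z-value `0` contribute `f^e_n(x, y)`, and blocks with
Z-value `1` contribute `f^e_n` at `(y, y)`, which is `2 ^ (n - 1) * y ^ n`.
-/

/-- The weight of a Pauli string on qubits indexed by `Fin m × Fin n`. -/
def wt2 {m n : ℕ} (v : Fin m × Fin n → ZMod 2 × ZMod 2) : ℕ :=
  (Finset.univ.filter fun p => v p ≠ (0, 0)).card

/-- The weight enumerator of a finite set of Pauli strings on `Fin m × Fin n`. -/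
noncomputable def enum2 {m n : ℕ} (T : Finset (Fin m × Fin n → ZMod 2 × ZMod 2))
    (x y : ℝ) : ℝ :=
  ∑ v ∈ T, x ^ (m * n - wt2 v) * y ^ wt2 v

/-- The stabilizer group of the `n × m` concatenated bit- and phase-flip repetition code:
even X-weight in each block, Z-part constant within each block, and the block Z-values
sum to zero. -/
def concatStab (m n : ℕ) : Finset (Fin m × Fin n → ZMod 2 × ZMod 2) :=
  Finset.univ.filter fun v =>
    (∀ i, ∑ j, (v (i, j)).1 = 0) ∧
    ∃ ζ : Fin m → ZMod 2, (∀ i j, (v (i, j)).2 = ζ i) ∧ ∑ i, ζ i = 0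

/-- The sign character of `ZMod 2`. -/
def signChar (s : ZMod 2) : ℝ := if s = 0 then 1 else -1

lemma signChar_add (s t : ZMod 2) : signChar (s + t) = signChar s * signChar t := by
  have h11 : (1 : ZMod 2) + 1 = 0 := by decide
  have h01 : ∀ r : ZMod 2, r = 0 ∨ r = 1 := by decide
  rcases h01 s with rfl | rfl <;> rcases h01 t with rfl | rfl <;> simp [signChar, h11]

lemma signChar_sum {ι : Type*} (T : Finset ι) (s : ι → ZMod 2) :
    signChar (∑ i ∈ T, s i) = ∏ i ∈ T, signChar (s i) := by
  classical
  induction T using Finset.induction_on with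
  | empty => simp [signChar]
  | insert a T ha ih => rw [Finset.sum_insert ha, Finset.prod_insert ha, signChar_add, ih]

lemma indicator_eq (s : ZMod 2) (r : ℝ) :
    (if s = 0 then r else 0) = (r + signChar s * r) / 2 := by
  unfold signChar
  split_ifs <;> ring

/-- The weighted count of `k`-tuples from `T` whose total parity is even is the average of the
plain and the sign-twisted `k`-th powers. -/
lemma sum_even_prod {α : Type*} [DecidableEq α] (k : ℕ) (T : Finset α) (s : α → ZMod 2)
    (u : α → ℝ) :
    ∑ a ∈ (Fintype.piFinset fun _ : Fin k => T) with ∑ j, s (a j) = 0, ∏ j, u (a j)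
      = ((∑ t ∈ T, u t) ^ k + (∑ t ∈ T, signChar (s t) * u t) ^ k) / 2 := by
  have key (g : α → ℝ) : (∑ t ∈ T, g t) ^ k
      = ∑ a ∈ Fintype.piFinset fun _ : Fin k => T, ∏ j, g (a j) := by
    rw [← Finset.prod_univ_sum]
    simp
  rw [Finset.sum_filter, key, key, ← Finset.sum_add_distrib, Finset.sum_div]
  refine Finset.sum_congr rfl fun a _ => ?_
  rw [indicator_eq, signChar_sum, Finset.prod_mul_distrib]

/-- The contribution of a single qubit to the weight monomial. -/
def qubitWeight (x y : ℝ) (p : ZMod 2 × ZMod 2) : ℝ := if p = (0, 0) then x else y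

lemma monomial_eq_prod {m n : ℕ} (v : Fin m × Fin n → ZMod 2 × ZMod 2) (x y : ℝ) :
    x ^ (m * n - wt2 v) * y ^ wt2 v = ∏ i, ∏ j, qubitWeight x y (v (i, j)) := by
  rw [← Fintype.prod_prod_type']
  have hc := Finset.card_filter_add_card_filter_not
    (s := (Finset.univ : Finset (Fin m × Fin n))) (fun p => v p = (0, 0))
  have hcard : (Finset.univ : Finset (Fin m × Fin n)).card = m * n := by simp
  have hw : m * n - wt2 v = (Finset.univ.filter fun p => v p = (0, 0)).card := by
    unfold wt2
    simp only [ne_eq]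
    omega
  rw [hw]
  simp [qubitWeight, Finset.prod_ite, wt2]

/-- The admissible single-block data: an X-part of even weight together with a Z-value. -/
def evenBlocks (n : ℕ) : Finset ((Fin n → ZMod 2) × ZMod 2) :=
  (Finset.univ.filter fun a : Fin n → ZMod 2 => ∑ j, a j = 0) ×ˢ Finset.univ

lemma sum_even_block (n : ℕ) (u : ZMod 2 → ℝ) :
    ∑ a : Fin n → ZMod 2 with ∑ j, a j = 0, ∏ j, u (a j)
      = ((u 0 + u 1) ^ n + (u 0 - u 1) ^ n) / 2 := by
  have h := sum_even_prod n (Finset.univ : Finset (ZMod 2)) id u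
  have h2 (g : ZMod 2 → ℝ) : ∑ t, g t = g 0 + g 1 := Fin.sum_univ_two g
  rw [h2, h2] at h
  simpa [signChar, ← sub_eq_add_neg] using h

lemma sum_evenBlocks (n : ℕ) (hn : 1 ≤ n) (x y : ℝ) (g : ZMod 2 → ℝ) :
    ∑ b ∈ evenBlocks n, g b.2 * ∏ j, qubitWeight x y (b.1 j, b.2)
      = g 0 * (((x + y) ^ n + (x - y) ^ n) / 2) + g 1 * (2 ^ (n - 1) * y ^ n) := by
  have h2 (g : ZMod 2 → ℝ) : ∑ t, g t = g 0 + g 1 := Fin.sum_univ_two g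
  rw [evenBlocks, Finset.sum_product_right, h2]
  simp only [← Finset.mul_sum]
  rw [sum_even_block n fun t => qubitWeight x y (t, 0),
    sum_even_block n fun t => qubitWeight x y (t, 1)]
  obtain ⟨k, rfl⟩ := Nat.exists_eq_add_of_le' hn
  simp [qubitWeight]
  left
  rw [← two_mul, mul_pow, pow_succ 2 k]
  ring

/-- Stabilizer elements correspond to tuples of admissible blocks with Z-values summing to zero. -/
lemma enum2_concatStab_eq (m n : ℕ) (hn : 1 ≤ n) (x y : ℝ) :
    enum2 (concatStab m n) x y
      = ∑ b ∈ (Fintype.piFinset fun _ : Fin m => evenBlocks n) with ∑ i, (b i).2 = 0,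
          ∏ i, ∏ j, qubitWeight x y ((b i).1 j, (b i).2) := by
  unfold enum2
  -- The Z-value of a block is read off at position `0`, which exists because `1 ≤ n`.
  refine Finset.sum_bij' (fun v _ i => (fun j => (v (i, j)).1, (v (i, ⟨0, hn⟩)).2))
    (fun b _ p => ((b p.1).1 p.2, (b p.1).2)) ?_ ?_ ?_ ?_ ?_
  · intro v hv
    simp only [concatStab, Finset.mem_filter, Finset.mem_univ, true_and] at hv
    obtain ⟨h1, ζ, h2, h3⟩ := hv
    simp [evenBlocks, Fintype.mem_piFinset, h1, h2, h3]
  · intro b hb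
    simp only [evenBlocks, Fintype.mem_piFinset, Finset.mem_filter, Finset.mem_product,
      Finset.mem_univ, true_and, and_true] at hb
    simp only [concatStab, Finset.mem_filter, Finset.mem_univ, true_and]
    exact ⟨hb.1, fun i => (b i).2, fun _ _ => rfl, hb.2⟩
  · intro v hv
    simp only [concatStab, Finset.mem_filter, Finset.mem_univ, true_and] at hv
    obtain ⟨h1, ζ, h2, h3⟩ := hv
    funext ⟨i, j⟩
    ext <;> simp [h2]
  · intro b hb
    rfl
  · intro v hv
    simp only [concatStab, Finset.mem_filter, Finset.mem_univ, true_and] at hv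
    obtain ⟨h1, ζ, h2, h3⟩ := hv
    rw [monomial_eq_prod]
    refine Finset.prod_congr rfl fun i _ => Finset.prod_congr rfl fun j _ => ?_
    congr 1
    ext <;> simp [h2]

theorem weight_enumerator_concatStab (m n : ℕ) (hm : 1 ≤ m) (hn : 1 ≤ n) (x y : ℝ) :
    enum2 (concatStab m n) x y
      = (1 / 2) *
        ((((x + y) ^ n + (x - y) ^ n) / 2 + 2 ^ (n - 1) * y ^ n) ^ m
          + (((x + y) ^ n + (x - y) ^ n) / 2 - 2 ^ (n - 1) * y ^ n) ^ m) := by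
  rw [enum2_concatStab_eq m n hn,
    sum_even_prod m (evenBlocks n) Prod.snd fun b => ∏ j, qubitWeight x y (b.1 j, b.2)]
  have h1 := sum_evenBlocks n hn x y fun _ => 1
  have h2 := sum_evenBlocks n hn x y signChar
  simp only [one_mul] at h1
  rw [h1, h2]
  simp only [signChar, if_true, one_ne_zero, if_false]
  ring
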